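/- Let the notation be as in the context, with two splicing data (superscripts 1 and 2) and the splicing map D. If B0^2 is injective and Binf^2 is surjective, then dim ker(D) ≥ (dim ker B0^1)·(dim ker Binf^2) + (dim ker Binf^1)·(dim ker B0^2) + max{(dim ker(Binf^1 B1^1))·(dim ker(B1^2 B0^2)), (dim ker B1^1)·(dim ker B1^2)}, and dim coker(D) ≥ (dim coker B0^1)·(dim coker Binf^2) + (dim coker Binf^1)·(dim coker B0^2) + max{(dim coker(B1^1 B0^1))·(dim coker(Binf^2 B1^2)), (dim coker B1^1)·(dim coker B1^2)}. -/

import Mathlib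

set_option maxHeartbeats 1600000

open Matrix Module
open scoped Kronecker

abbrev F2 : Type := ZMod 2

/-- A splicing datum: the algebraic data extracted from the knot Floer homology of a knot
in a homology sphere, as in Eftekhary's splicing formula. -/
structure SplicingDatum where
  a0 : ℕ
  a1 : ℕ
  ainf : ℕ
  A0 : Matrix (Fin ainf) (Fin ainf) F2
  B0 : Matrix (Fin ainf) (Fin a1) F2
  C0 : Matrix (Fin a1) (Fin ainf) F2
  D0 : Matrix (Fin a1) (Fin a1) F2
  A1 : Matrix (Fin a0) (Fin a0) F2
  B1 : Matrix (Fin a0) (Fin ainf) F2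
  C1 : Matrix (Fin ainf) (Fin a0) F2
  D1 : Matrix (Fin ainf) (Fin ainf) F2
  Ainf : Matrix (Fin a1) (Fin a1) F2
  Binf : Matrix (Fin a1) (Fin a0) F2
  Cinf : Matrix (Fin a0) (Fin a1) F2
  Dinf : Matrix (Fin a0) (Fin a0) F2
  C0inv : Matrix (Fin a1) (Fin ainf) F2
  C1inv : Matrix (Fin ainf) (Fin a0) F2
  Cinfinv : Matrix (Fin a0) (Fin a1) F2
  inv0_left : Matrix.fromBlocks A0 B0 C0 D0 * Matrix.fromBlocks A0 B0 C0inv D0 = 1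
  inv0_right : Matrix.fromBlocks A0 B0 C0inv D0 * Matrix.fromBlocks A0 B0 C0 D0 = 1
  inv1_left : Matrix.fromBlocks A1 B1 C1 D1 * Matrix.fromBlocks A1 B1 C1inv D1 = 1
  inv1_right : Matrix.fromBlocks A1 B1 C1inv D1 * Matrix.fromBlocks A1 B1 C1 D1 = 1
  invinf_left : Matrix.fromBlocks Ainf Binf Cinf Dinf * Matrix.fromBlocks Ainf Binf Cinfinv Dinf = 1
  invinf_right : Matrix.fromBlocks Ainf Binf Cinfinv Dinf * Matrix.fromBlocks Ainf Binf Cinf Dinf = 1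
  comm0 : A0 * B0 + B0 * D0 = 0
  comm1 : A1 * B1 + B1 * D1 = 0
  comminf : Ainf * Binf + Binf * Dinf = 0
  sq0 : B1 * B0 * Binf * (B1 * B0 * Binf) = 0
  sq1 : Binf * B1 * B0 * (Binf * B1 * B0) = 0
  sqinf : B0 * Binf * B1 * (B0 * Binf * B1) = 0

/-- dimension of the kernel of the linear map induced by a matrix -/
noncomputable def kdim {m n : Type*} [Fintype n] (M : Matrix m n F2) : ℕ :=
  finrank F2 ↥(LinearMap.ker M.mulVecLin)

/-- dimension of the cokernel of the linear map induced by a matrix -/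
noncomputable def cdim {m n : Type*} [Fintype n] (M : Matrix m n F2) : ℕ :=
  finrank F2 ((m → F2) ⧸ LinearMap.range M.mulVecLin)

/-- tensor product of two vectors, as a vector indexed by the product type -/
def tensVec {m n : Type*} (x : m → F2) (y : n → F2) : m × n → F2 :=
  fun p => x p.1 * y p.2

namespace SplicingDatum

variable (d : SplicingDatum)

def X0M : Matrix (Fin d.a0) (Fin d.a0) F2 := d.B1 * d.B0 * d.Binf
def X1M : Matrix (Fin d.a1) (Fin d.a1) F2 := d.Binf * d.B1 * d.B0
def XinfM : Matrix (Fin d.ainf) (Fin d.ainf) F2 := d.B0 * d.Binf * d.B1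

def tau0 : Matrix (Fin d.ainf ⊕ Fin d.a1) (Fin d.ainf ⊕ Fin d.a1) F2 :=
  Matrix.fromBlocks d.A0 d.B0 d.C0 d.D0
def tau0inv : Matrix (Fin d.ainf ⊕ Fin d.a1) (Fin d.ainf ⊕ Fin d.a1) F2 :=
  Matrix.fromBlocks d.A0 d.B0 d.C0inv d.D0
def tau1 : Matrix (Fin d.a0 ⊕ Fin d.ainf) (Fin d.a0 ⊕ Fin d.ainf) F2 :=
  Matrix.fromBlocks d.A1 d.B1 d.C1 d.D1
def tau1inv : Matrix (Fin d.a0 ⊕ Fin d.ainf) (Fin d.a0 ⊕ Fin d.ainf) F2 :=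
  Matrix.fromBlocks d.A1 d.B1 d.C1inv d.D1
def tauinf : Matrix (Fin d.a1 ⊕ Fin d.a0) (Fin d.a1 ⊕ Fin d.a0) F2 :=
  Matrix.fromBlocks d.Ainf d.Binf d.Cinf d.Dinf
def tauinfinv : Matrix (Fin d.a1 ⊕ Fin d.a0) (Fin d.a1 ⊕ Fin d.a0) F2 :=
  Matrix.fromBlocks d.Ainf d.Binf d.Cinfinv d.Dinf

/-- the map `finf : F^{ainf+a1} → F^{a0+ainf}` -/
def finfM : Matrix (Fin d.a0 ⊕ Fin d.ainf) (Fin d.ainf ⊕ Fin d.a1) F2 :=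
  Matrix.fromBlocks 0 0 (1 : Matrix (Fin d.ainf) (Fin d.ainf) F2) 0
/-- the map `f0 : F^{a0+ainf} → F^{a1+a0}` -/
def f0M : Matrix (Fin d.a1 ⊕ Fin d.a0) (Fin d.a0 ⊕ Fin d.ainf) F2 :=
  Matrix.fromBlocks 0 0 (1 : Matrix (Fin d.a0) (Fin d.a0) F2) 0
/-- the map `f1 : F^{a1+a0} → F^{ainf+a1}` -/
def f1M : Matrix (Fin d.ainf ⊕ Fin d.a1) (Fin d.a1 ⊕ Fin d.a0) F2 :=
  Matrix.fromBlocks 0 0 (1 : Matrix (Fin d.a1) (Fin d.a1) F2) 0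

def fbarinfM : Matrix (Fin d.a0 ⊕ Fin d.ainf) (Fin d.ainf ⊕ Fin d.a1) F2 :=
  d.tau1inv * d.finfM * d.tau0
def fbar0M : Matrix (Fin d.a1 ⊕ Fin d.a0) (Fin d.a0 ⊕ Fin d.ainf) F2 :=
  d.tauinfinv * d.f0M * d.tau1
def fbar1M : Matrix (Fin d.ainf ⊕ Fin d.a1) (Fin d.a1 ⊕ Fin d.a0) F2 :=
  d.tau0inv * d.f1M * d.tauinf

noncomputable def r0 : ℕ := d.B0.rank
noncomputable def r1 : ℕ := d.B1.rank
noncomputable def rinf : ℕ := d.Binf.rank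

noncomputable def k0 : ℕ :=
  finrank F2 ↥(LinearMap.ker d.f0M.mulVecLin ⊓ LinearMap.ker d.fbar0M.mulVecLin)
noncomputable def k1 : ℕ :=
  finrank F2 ↥(LinearMap.ker d.f1M.mulVecLin ⊓ LinearMap.ker d.fbar1M.mulVecLin)
noncomputable def kinf : ℕ :=
  finrank F2 ↥(LinearMap.ker d.finfM.mulVecLin ⊓ LinearMap.ker d.fbarinfM.mulVecLin)

noncomputable def l0 : ℕ :=
  finrank F2 ↥(LinearMap.ker (d.f0M + d.fbar0M).mulVecLin) - d.k0
noncomputable def l1 : ℕ :=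
  finrank F2 ↥(LinearMap.ker (d.f1M + d.fbar1M).mulVecLin) - d.k1
noncomputable def linf : ℕ :=
  finrank F2 ↥(LinearMap.ker (d.finfM + d.fbarinfM).mulVecLin) - d.kinf

noncomputable def c0 : ℕ :=
  finrank F2 ((Fin d.a1 ⊕ Fin d.a0 → F2) ⧸
    (LinearMap.range d.f0M.mulVecLin ⊔ LinearMap.range d.fbar0M.mulVecLin))
noncomputable def c1 : ℕ :=
  finrank F2 ((Fin d.ainf ⊕ Fin d.a1 → F2) ⧸
    (LinearMap.range d.f1M.mulVecLin ⊔ LinearMap.range d.fbar1M.mulVecLin))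
noncomputable def cinf : ℕ :=
  finrank F2 ((Fin d.a0 ⊕ Fin d.ainf → F2) ⧸
    (LinearMap.range d.finfM.mulVecLin ⊔ LinearMap.range d.fbarinfM.mulVecLin))

noncomputable def dd0 : ℕ :=
  finrank F2 ↥(LinearMap.range d.f0M.mulVecLin ⊔ LinearMap.range d.fbar0M.mulVecLin) -
    finrank F2 ↥(LinearMap.range (d.f0M + d.fbar0M).mulVecLin)
noncomputable def dd1 : ℕ :=
  finrank F2 ↥(LinearMap.range d.f1M.mulVecLin ⊔ LinearMap.range d.fbar1M.mulVecLin) -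
    finrank F2 ↥(LinearMap.range (d.f1M + d.fbar1M).mulVecLin)
noncomputable def ddinf : ℕ :=
  finrank F2 ↥(LinearMap.range d.finfM.mulVecLin ⊔ LinearMap.range d.fbarinfM.mulVecLin) -
    finrank F2 ↥(LinearMap.range (d.finfM + d.fbarinfM).mulVecLin)

noncomputable def delta0 : ℕ := d.a0 - d.rinf - d.l0
noncomputable def delta1 : ℕ := d.a1 - d.r0 - d.l1
noncomputable def deltainf : ℕ := d.ainf - d.r1 - d.linf

end SplicingDatum

namespace SplicingDatum

/-- Index type of the source of the splicing map `D`. -/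
abbrev Src (e1 e2 : SplicingDatum) : Type :=
  (Fin e1.ainf × Fin e2.ainf) ⊕ (Fin e1.ainf × Fin e2.a0) ⊕ (Fin e1.a1 × Fin e2.a0) ⊕
    (Fin e1.a0 × Fin e2.ainf) ⊕ (Fin e1.a0 × Fin e2.a1) ⊕ (Fin e1.a1 × Fin e2.a1)

/-- Index type of the target of the splicing map `D`. -/
abbrev Tgt (e1 e2 : SplicingDatum) : Type :=
  (Fin e1.a0 × Fin e2.a0) ⊕ (Fin e1.ainf × Fin e2.a1) ⊕ (Fin e1.ainf × Fin e2.a0) ⊕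
    (Fin e1.a1 × Fin e2.ainf) ⊕ (Fin e1.a0 × Fin e2.ainf) ⊕ (Fin e1.a1 × Fin e2.a1)

def row1 (e1 e2 : SplicingDatum) : Matrix (Fin e1.a0 × Fin e2.a0) (Src e1 e2) F2 :=
  Matrix.fromCols ((e1.Dinf * e1.B1) ⊗ₖ (e2.B1 * e2.A0)) <|
  Matrix.fromCols ((e1.B1 * e1.A0) ⊗ₖ (1 : Matrix (Fin e2.a0) (Fin e2.a0) F2)) <|
  Matrix.fromCols ((e1.B1 * e1.B0) ⊗ₖ (1 : Matrix (Fin e2.a0) (Fin e2.a0) F2)) <|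
  Matrix.fromCols ((e1.Dinf * e1.A1) ⊗ₖ (e2.B1 * e2.A0)) <|
  Matrix.fromCols ((1 : Matrix (Fin e1.a0) (Fin e1.a0) F2) ⊗ₖ (e2.B1 * e2.B0)) 0

def row2 (e1 e2 : SplicingDatum) : Matrix (Fin e1.ainf × Fin e2.a1) (Src e1 e2) F2 :=
  Matrix.fromCols ((1 : Matrix (Fin e1.ainf) (Fin e1.ainf) F2) ⊗ₖ (e2.Binf * e2.B1)) <|
  Matrix.fromCols ((e1.D1 * e1.A0) ⊗ₖ (e2.Binf * e2.A1)) <|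
  Matrix.fromCols ((e1.D1 * e1.B0) ⊗ₖ (e2.Binf * e2.A1)) <|
  Matrix.fromCols 0 <|
  Matrix.fromCols ((e1.B0 * e1.Binf) ⊗ₖ (1 : Matrix (Fin e2.a1) (Fin e2.a1) F2))
    ((e1.B0 * e1.Ainf) ⊗ₖ (1 : Matrix (Fin e2.a1) (Fin e2.a1) F2))

def row3 (e1 e2 : SplicingDatum) : Matrix (Fin e1.ainf × Fin e2.a0) (Src e1 e2) F2 :=
  Matrix.fromCols ((1 : Matrix (Fin e1.ainf) (Fin e1.ainf) F2) ⊗ₖ (e2.Dinf * e2.B1)) <|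
  Matrix.fromCols
    ((1 : Matrix (Fin e1.ainf) (Fin e1.ainf) F2) ⊗ₖ (1 : Matrix (Fin e2.a0) (Fin e2.a0) F2) +
      (e1.D1 * e1.A0) ⊗ₖ (e2.Dinf * e2.A1)) <|
  Matrix.fromCols ((e1.D1 * e1.B0) ⊗ₖ (e2.Dinf * e2.A1)) <|
  Matrix.fromCols 0 <|
  Matrix.fromCols 0 0

def row4 (e1 e2 : SplicingDatum) : Matrix (Fin e1.a1 × Fin e2.ainf) (Src e1 e2) F2 :=
  Matrix.fromCols ((e1.Binf * e1.B1) ⊗ₖ (1 : Matrix (Fin e2.ainf) (Fin e2.ainf) F2)) <|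
  Matrix.fromCols 0 <|
  Matrix.fromCols ((1 : Matrix (Fin e1.a1) (Fin e1.a1) F2) ⊗ₖ (e2.B0 * e2.Binf)) <|
  Matrix.fromCols ((e1.Binf * e1.A1) ⊗ₖ (1 : Matrix (Fin e2.ainf) (Fin e2.ainf) F2)) <|
  Matrix.fromCols
    ((e1.D0 * e1.Binf) ⊗ₖ (e2.B0 * e2.Ainf) + (e1.X1M * e1.Binf) ⊗ₖ (e2.B0 * e2.X1M))
    ((e1.D0 * e1.Ainf) ⊗ₖ (e2.B0 * e2.Ainf) + (e1.X1M * e1.Ainf) ⊗ₖ (e2.B0 * e2.X1M))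

def row5 (e1 e2 : SplicingDatum) : Matrix (Fin e1.a0 × Fin e2.ainf) (Src e1 e2) F2 :=
  Matrix.fromCols ((e1.Dinf * e1.B1) ⊗ₖ (e2.D1 * e2.A0)) <|
  Matrix.fromCols 0 <|
  Matrix.fromCols 0 <|
  Matrix.fromCols
    ((1 : Matrix (Fin e1.a0) (Fin e1.a0) F2) ⊗ₖ (1 : Matrix (Fin e2.ainf) (Fin e2.ainf) F2) +
      (e1.Dinf * e1.A1) ⊗ₖ (e2.D1 * e2.A0)) <|
  Matrix.fromCols ((1 : Matrix (Fin e1.a0) (Fin e1.a0) F2) ⊗ₖ (e2.D1 * e2.B0)) 0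

def row6 (e1 e2 : SplicingDatum) : Matrix (Fin e1.a1 × Fin e2.a1) (Src e1 e2) F2 :=
  Matrix.fromCols 0 <|
  Matrix.fromCols 0 <|
  Matrix.fromCols ((1 : Matrix (Fin e1.a1) (Fin e1.a1) F2) ⊗ₖ (e2.D0 * e2.Binf)) <|
  Matrix.fromCols 0 <|
  Matrix.fromCols
    ((e1.D0 * e1.Binf) ⊗ₖ (e2.D0 * e2.Ainf) + (e1.X1M * e1.Binf) ⊗ₖ (e2.D0 * e2.X1M))
    ((1 : Matrix (Fin e1.a1) (Fin e1.a1) F2) ⊗ₖ (1 : Matrix (Fin e2.a1) (Fin e2.a1) F2) +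
      (e1.D0 * e1.Ainf) ⊗ₖ (e2.D0 * e2.Ainf) + (e1.X1M * e1.Ainf) ⊗ₖ (e2.D0 * e2.X1M))

/-- The splicing map `D = D(K1, K2)` as a `6 × 6` block matrix. -/
def spliceD (e1 e2 : SplicingDatum) : Matrix (Tgt e1 e2) (Src e1 e2) F2 :=
  Matrix.fromRows (row1 e1 e2) <| Matrix.fromRows (row2 e1 e2) <|
  Matrix.fromRows (row3 e1 e2) <| Matrix.fromRows (row4 e1 e2) <|
  Matrix.fromRows (row5 e1 e2) (row6 e1 e2)

end SplicingDatum

/-!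
The bounds come from explicit independent families in `ker D` and `coker D`. For the kernel these
are `ker B0¹ ⊗ ker Binf²` in the third source summand, `ker Binf¹ ⊗ ker B0²` in the fifth, and one
family detected by the first summand: either `ker B1¹ ⊗ ker B1²`, or the vectors
`(x ⊗ B0² y, 0, 0, 0, Dinf¹ B1¹ x ⊗ D0² y, 0)` with `x ∈ ker (Binf¹ B1¹)` and
`y ∈ ker (B1² B0²)`, whose first component depends on `y` modulo `ker B0²`.

Dually, write `M^⊥` for the space of row vectors `φ` with `φ M = 0`, whose dimension is that of
`coker M`. Then `D^⊥` contains `(B0¹)^⊥ ⊗ (Binf²)^⊥` in the second target summand,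
`(Binf¹)^⊥ ⊗ (B0²)^⊥` in the fourth, and either `(B1¹)^⊥ ⊗ (B1²)^⊥` in the first or the vectors
`(φ ⊗ ψ Binf², φ B1¹ A0¹ ⊗ ψ Ainf², φ B1¹ A0¹ ⊗ ψ Binf², 0, 0, 0)` with `φ ∈ (B1¹ B0¹)^⊥` and
`ψ ∈ (Binf² B1²)^⊥`, whose first component depends on `ψ` modulo `(Binf²)^⊥`.
-/

section KernelBases

variable {m n k : Type*} [Fintype n]

theorem kdim_eq_zero_of_injective {M : Matrix m n F2} (hM : Function.Injective M.mulVecLin) :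
    kdim M = 0 := by
  rw [kdim, LinearMap.ker_eq_bot.mpr hM, finrank_bot]

theorem exists_basis_matrix_of_disjoint_ker {K : Type*} [Field K] [Fintype m]
    (N : Matrix m n K) {p : Submodule K (n → K)} (hp : Disjoint p (LinearMap.ker N.mulVecLin)) :
    ∃ (B : Matrix n (Fin (finrank K p)) K) (L : Matrix (Fin (finrank K p)) m K),
      (∀ x, B *ᵥ x ∈ p) ∧ L * (N * B) = 1 := by
  classical
  let b : (Fin (finrank K p) → K) ≃ₗ[K] p := (finBasis K p).equivFun.symm
  let f : (Fin (finrank K p) → K) →ₗ[K] (n → K) := p.subtype ∘ₗ b.toLinearMap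
  have hf : LinearMap.ker (N.mulVecLin ∘ₗ f) = ⊥ := by
    rw [LinearMap.ker_eq_bot']
    intro x hx
    have hfx : f x = 0 := Submodule.disjoint_def.mp hp (f x) (b x).2 hx
    simpa [f] using hfx
  obtain ⟨g, hg⟩ := LinearMap.exists_leftInverse_of_injective _ hf
  refine ⟨LinearMap.toMatrix' f, LinearMap.toMatrix' g, fun x ↦ ?_, ?_⟩
  · rw [LinearMap.toMatrix'_mulVec]
    exact (b x).2
  · calc LinearMap.toMatrix' g * (N * LinearMap.toMatrix' f)
        = LinearMap.toMatrix' (g ∘ₗ N.mulVecLin ∘ₗ f) := by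
          rw [LinearMap.toMatrix'_comp, LinearMap.toMatrix'_comp, ← Matrix.toLin'_apply',
            LinearMap.toMatrix'_toLin']
      _ = 1 := by rw [hg, LinearMap.toMatrix'_id]

theorem exists_relative_kernel_basis_matrix [Fintype m] (M : Matrix k m F2)
    (N : Matrix m n F2) :
    ∃ (Y : Matrix n (Fin (kdim (M * N) - kdim N)) F2)
      (L : Matrix (Fin (kdim (M * N) - kdim N)) m F2), M * (N * Y) = 0 ∧ L * (N * Y) = 1 := by
  classical
  have hle : LinearMap.ker N.mulVecLin ≤ LinearMap.ker (M * N).mulVecLin := by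
    rw [Matrix.mulVecLin_mul]
    exact LinearMap.ker_le_ker_comp _ _
  obtain ⟨p, hdisj, hsup⟩ := IsModularLattice.exists_disjoint_and_sup_eq hle
  have hrank : finrank F2 p = kdim (M * N) - kdim N := by
    have h := Submodule.finrank_sup_add_finrank_inf_eq (LinearMap.ker N.mulVecLin) p
    rw [hsup, hdisj.eq_bot, finrank_bot] at h
    unfold kdim
    omega
  rw [← hrank]
  obtain ⟨Y, L, hY, hL⟩ := exists_basis_matrix_of_disjoint_ker N hdisj.symm
  refine ⟨Y, L, Matrix.ext_of_mulVec_single fun i ↦ ?_, hL⟩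
  have hker : Y *ᵥ Pi.single i 1 ∈ LinearMap.ker (M * N).mulVecLin :=
    hsup ▸ Submodule.mem_sup_right (hY _)
  simpa only [LinearMap.mem_ker, Matrix.mulVecLin_apply, Matrix.mulVec_mulVec, Matrix.mul_assoc,
    Matrix.zero_mulVec] using hker

theorem exists_kernel_basis_matrix (M : Matrix m n F2) :
    ∃ (Y : Matrix n (Fin (kdim M)) F2) (L : Matrix (Fin (kdim M)) n F2),
      M * Y = 0 ∧ L * Y = 1 := by
  classical
  have hone : kdim (1 : Matrix n n F2) = 0 :=
    kdim_eq_zero_of_injective (by simp [Function.Injective])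
  have h := exists_relative_kernel_basis_matrix M (1 : Matrix n n F2)
  simp only [Matrix.one_mul] at h
  rwa [Matrix.mul_one, hone, Nat.sub_zero] at h

end KernelBases

section TriangularFamilies

variable {m n ι κ μ : Type*} [Fintype n]

theorem card_le_kdim_of_left_inverse [Fintype ι] [DecidableEq ι] {M : Matrix m n F2}
    {Y : Matrix n ι F2} {L : Matrix ι n F2} (hY : M * Y = 0) (hL : L * Y = 1) :
    Fintype.card ι ≤ kdim M := by
  let f : (ι → F2) →ₗ[F2] LinearMap.ker M.mulVecLin :=
    Y.mulVecLin.codRestrict _ fun c ↦ by simp [Matrix.mulVec_mulVec, hY]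
  have hf : Function.Injective f := by
    intro x y hxy
    have hYxy : Y *ᵥ x = Y *ᵥ y := congrArg Subtype.val hxy
    simpa [Matrix.mulVec_mulVec, hL] using congrArg (L *ᵥ ·) hYxy
  simpa [kdim] using LinearMap.finrank_le_finrank_of_injective hf

theorem fromRows_mul_fromCols_eq_one_of_triangular {R : Type*} [Ring R]
    [DecidableEq ι] [Fintype κ] [DecidableEq κ]
    {A : Matrix n ι R} {B : Matrix n κ R} {P : Matrix ι n R} {Q : Matrix κ n R}
    (hPA : P * A = 1) (hQA : Q * A = 0) (hQB : Q * B = 1) :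
    Matrix.fromRows (P - P * B * Q) Q * Matrix.fromCols A B = 1 := by
  simp [Matrix.sub_mul, Matrix.mul_assoc, hPA, hQA, hQB]

theorem card_add_card_add_card_le_kdim [Fintype ι] [DecidableEq ι] [Fintype κ] [DecidableEq κ]
    [Fintype μ] [DecidableEq μ] {M : Matrix m n F2}
    {A : Matrix n ι F2} {B : Matrix n κ F2} {C : Matrix n μ F2}
    {P : Matrix ι n F2} {Q : Matrix κ n F2} {R : Matrix μ n F2}
    (hA : M * A = 0) (hB : M * B = 0) (hC : M * C = 0)
    (hPA : P * A = 1) (hQA : Q * A = 0) (hQB : Q * B = 1)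
    (hRA : R * A = 0) (hRB : R * B = 0) (hRC : R * C = 1) :
    Fintype.card ι + Fintype.card κ + Fintype.card μ ≤ kdim M := by
  have hker : M * Matrix.fromCols (Matrix.fromCols A B) C = 0 := by
    simp [Matrix.mul_fromCols, hA, hB, hC]
  have hRAB : R * Matrix.fromCols A B = 0 := by simp [Matrix.mul_fromCols, hRA, hRB]
  simpa using card_le_kdim_of_left_inverse hker (fromRows_mul_fromCols_eq_one_of_triangular
    (fromRows_mul_fromCols_eq_one_of_triangular hPA hQA hQB) hRAB hRC)

end TriangularFamilies

section Cokernels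

variable {l m n ι κ μ : Type*} [Fintype n]

theorem cdim_eq_zero_of_surjective {M : Matrix m n F2} (hM : Function.Surjective M.mulVecLin) :
    cdim M = 0 := by
  rw [cdim, LinearMap.range_eq_top.mpr hM]
  exact finrank_zero_of_subsingleton

variable [Fintype m]

theorem cdim_eq_kdim_transpose (M : Matrix m n F2) : cdim M = kdim Mᵀ := by
  have hcoker := Submodule.finrank_quotient_add_finrank (LinearMap.range M.mulVecLin)
  have hker := LinearMap.finrank_range_add_finrank_ker Mᵀ.mulVecLin
  have hrank : finrank F2 (LinearMap.range Mᵀ.mulVecLin) =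
      finrank F2 (LinearMap.range M.mulVecLin) := Matrix.rank_transpose M
  rw [finrank_fintype_fun_eq_card] at hcoker hker
  unfold cdim kdim
  omega

theorem exists_cokernel_basis_matrix (M : Matrix m n F2) :
    ∃ (Y : Matrix (Fin (cdim M)) m F2) (R : Matrix m (Fin (cdim M)) F2),
      Y * M = 0 ∧ Y * R = 1 := by
  rw [cdim_eq_kdim_transpose]
  obtain ⟨Y, L, hY, hL⟩ := exists_kernel_basis_matrix Mᵀ
  exact ⟨Yᵀ, Lᵀ, by simpa [Matrix.transpose_mul] using congrArg Matrix.transpose hY,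
    by rw [← Matrix.transpose_mul, hL, Matrix.transpose_one]⟩

theorem exists_relative_cokernel_basis_matrix [Fintype l] (N : Matrix l m F2)
    (M : Matrix m n F2) :
    ∃ (Y : Matrix (Fin (cdim (N * M) - cdim N)) l F2)
      (R : Matrix m (Fin (cdim (N * M) - cdim N)) F2), Y * N * M = 0 ∧ Y * N * R = 1 := by
  rw [cdim_eq_kdim_transpose, cdim_eq_kdim_transpose, Matrix.transpose_mul]
  obtain ⟨Y, L, hY, hL⟩ := exists_relative_kernel_basis_matrix Mᵀ Nᵀ
  exact ⟨Yᵀ, Lᵀ, by simpa [Matrix.transpose_mul] using congrArg Matrix.transpose hY,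
    by simpa [Matrix.transpose_mul] using congrArg Matrix.transpose hL⟩

theorem card_add_card_add_card_le_cdim [Fintype ι] [DecidableEq ι] [Fintype κ] [DecidableEq κ]
    [Fintype μ] [DecidableEq μ] {M : Matrix m n F2}
    {A : Matrix ι m F2} {B : Matrix κ m F2} {C : Matrix μ m F2}
    {P : Matrix m ι F2} {Q : Matrix m κ F2} {R : Matrix m μ F2}
    (hA : A * M = 0) (hB : B * M = 0) (hC : C * M = 0)
    (hAP : A * P = 1) (hAQ : A * Q = 0) (hBQ : B * Q = 1)
    (hAR : A * R = 0) (hBR : B * R = 0) (hCR : C * R = 1) :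
    Fintype.card ι + Fintype.card κ + Fintype.card μ ≤ cdim M := by
  rw [cdim_eq_kdim_transpose]
  apply card_add_card_add_card_le_kdim (A := Aᵀ) (B := Bᵀ) (C := Cᵀ) (P := Pᵀ) (Q := Qᵀ) (R := Rᵀ)
  all_goals simp only [← Matrix.transpose_mul, Matrix.transpose_zero, Matrix.transpose_one, *]

end Cokernels

theorem kronecker_mul_kronecker_eq_one {R l m l' m' : Type*} [CommSemiring R] [Fintype m]
    [Fintype m'] [DecidableEq l] [DecidableEq l'] {A : Matrix l m R} {B : Matrix m l R}
    {A' : Matrix l' m' R} {B' : Matrix m' l' R} (h : A * B = 1) (h' : A' * B' = 1) :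
    A ⊗ₖ A' * B ⊗ₖ B' = 1 := by
  rw [← Matrix.mul_kronecker_mul, h, h', Matrix.one_kronecker_one]

theorem fromCols_add_fromCols {R m n₁ n₂ : Type*} [Add R] (A A' : Matrix m n₁ R)
    (B B' : Matrix m n₂ R) :
    Matrix.fromCols A B + Matrix.fromCols A' B' = Matrix.fromCols (A + A') (B + B') := by
  ext i (j | j) <;> rfl

namespace SplicingDatum

theorem A0_mul_B0 (d : SplicingDatum) : d.A0 * d.B0 = d.B0 * d.D0 := by
  rw [← sub_eq_zero, ZModModule.sub_eq_add, d.comm0]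

theorem Ainf_mul_Binf (d : SplicingDatum) : d.Ainf * d.Binf = d.Binf * d.Dinf := by
  rw [← sub_eq_zero, ZModModule.sub_eq_add, d.comminf]

/-- The matrix with values in the source of the splicing map whose six block rows are the given
ones. Its columns are families of vectors in the source. -/
def srcBlocks {e1 e2 : SplicingDatum} {ι : Type*}
    (A₁ : Matrix (Fin e1.ainf × Fin e2.ainf) ι F2) (A₂ : Matrix (Fin e1.ainf × Fin e2.a0) ι F2)
    (A₃ : Matrix (Fin e1.a1 × Fin e2.a0) ι F2) (A₄ : Matrix (Fin e1.a0 × Fin e2.ainf) ι F2)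
    (A₅ : Matrix (Fin e1.a0 × Fin e2.a1) ι F2) (A₆ : Matrix (Fin e1.a1 × Fin e2.a1) ι F2) :
    Matrix (Src e1 e2) ι F2 :=
  Matrix.fromRows A₁ <| Matrix.fromRows A₂ <| Matrix.fromRows A₃ <| Matrix.fromRows A₄ <|
    Matrix.fromRows A₅ A₆

/-- The matrix acting on the target of the splicing map whose six block columns are the given
ones. Its rows are families of functionals on the target. -/
def tgtBlocks {e1 e2 : SplicingDatum} {ι : Type*}
    (A₁ : Matrix ι (Fin e1.a0 × Fin e2.a0) F2) (A₂ : Matrix ι (Fin e1.ainf × Fin e2.a1) F2)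
    (A₃ : Matrix ι (Fin e1.ainf × Fin e2.a0) F2) (A₄ : Matrix ι (Fin e1.a1 × Fin e2.ainf) F2)
    (A₅ : Matrix ι (Fin e1.a0 × Fin e2.ainf) F2) (A₆ : Matrix ι (Fin e1.a1 × Fin e2.a1) F2) :
    Matrix ι (Tgt e1 e2) F2 :=
  Matrix.fromCols A₁ <| Matrix.fromCols A₂ <| Matrix.fromCols A₃ <| Matrix.fromCols A₄ <|
    Matrix.fromCols A₅ A₆

variable {e1 e2 : SplicingDatum}

section Kernel

theorem spliceD_mul_srcBlocks_third {ι κ : Type*} {K : Matrix (Fin e1.a1) ι F2}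
    {L : Matrix (Fin e2.a0) κ F2} (hK : e1.B0 * K = 0) (hL : e2.Binf * L = 0) :
    spliceD e1 e2 * srcBlocks 0 0 (K ⊗ₖ L) 0 0 0 = 0 := by
  simp [srcBlocks, spliceD, row1, row2, row3, row4, row5, row6, Matrix.fromRows_mul,
    -Matrix.fromRows_fromCols_eq_fromBlocks, Matrix.fromCols_mul_fromRows,
    ← Matrix.mul_kronecker_mul, Matrix.mul_assoc, hK, hL]

theorem spliceD_mul_srcBlocks_fifth {ι κ : Type*} {K : Matrix (Fin e1.a0) ι F2}
    {L : Matrix (Fin e2.a1) κ F2} (hK : e1.Binf * K = 0) (hL : e2.B0 * L = 0) :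
    spliceD e1 e2 * srcBlocks 0 0 0 0 (K ⊗ₖ L) 0 = 0 := by
  simp [srcBlocks, spliceD, row1, row2, row3, row4, row5, row6, Matrix.fromRows_mul,
    -Matrix.fromRows_fromCols_eq_fromBlocks, Matrix.fromCols_mul_fromRows, Matrix.add_mul,
    ← Matrix.mul_kronecker_mul, Matrix.mul_assoc, hK, hL]

theorem spliceD_mul_srcBlocks_first {ι κ : Type*} {K : Matrix (Fin e1.ainf) ι F2}
    {L : Matrix (Fin e2.ainf) κ F2} (hK : e1.B1 * K = 0) (hL : e2.B1 * L = 0) :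
    spliceD e1 e2 * srcBlocks (K ⊗ₖ L) 0 0 0 0 0 = 0 := by
  simp [srcBlocks, spliceD, row1, row2, row3, row4, row5, row6, Matrix.fromRows_mul,
    -Matrix.fromRows_fromCols_eq_fromBlocks, Matrix.fromCols_mul_fromRows,
    ← Matrix.mul_kronecker_mul, Matrix.mul_assoc, hK, hL]

theorem spliceD_mul_srcBlocks_first_fifth {ι κ : Type*} {K : Matrix (Fin e1.ainf) ι F2}
    {L : Matrix (Fin e2.a1) κ F2} (hK : e1.Binf * (e1.B1 * K) = 0)
    (hL : e2.B1 * (e2.B0 * L) = 0) :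
    spliceD e1 e2 *
      srcBlocks (K ⊗ₖ (e2.B0 * L)) 0 0 0 ((e1.Dinf * e1.B1 * K) ⊗ₖ (e2.D0 * L)) 0 = 0 := by
  have hA0 : e2.A0 * (e2.B0 * L) = e2.B0 * (e2.D0 * L) := by
    rw [← Matrix.mul_assoc, A0_mul_B0, Matrix.mul_assoc]
  have hDinf : e1.Binf * (e1.Dinf * (e1.B1 * K)) = 0 := by
    rw [← Matrix.mul_assoc, ← Ainf_mul_Binf, Matrix.mul_assoc, hK, Matrix.mul_zero]
  simp [srcBlocks, spliceD, row1, row2, row3, row4, row5, row6, Matrix.fromRows_mul,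
    -Matrix.fromRows_fromCols_eq_fromBlocks, Matrix.fromCols_mul_fromRows, Matrix.add_mul,
    ← Matrix.mul_kronecker_mul, Matrix.mul_assoc, hK, hL, hA0, hDinf, ZModModule.add_self]

theorem add_card_le_kdim_spliceD {μ : Type*} [Fintype μ] [DecidableEq μ]
    {C : Matrix (Fin e1.ainf × Fin e2.ainf) μ F2} {R : Matrix μ (Fin e1.ainf × Fin e2.ainf) F2}
    {T : Matrix (Fin e1.a0 × Fin e2.a1) μ F2}
    (hC : spliceD e1 e2 * srcBlocks C 0 0 0 T 0 = 0) (hR : R * C = 1) :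
    kdim e1.B0 * kdim e2.Binf + kdim e1.Binf * kdim e2.B0 + Fintype.card μ ≤
      kdim (spliceD e1 e2) := by
  obtain ⟨K₃, P₃, hK₃, hP₃⟩ := exists_kernel_basis_matrix e1.B0
  obtain ⟨L₃, Q₃, hL₃, hQ₃⟩ := exists_kernel_basis_matrix e2.Binf
  obtain ⟨K₅, P₅, hK₅, hP₅⟩ := exists_kernel_basis_matrix e1.Binf
  obtain ⟨L₅, Q₅, hL₅, hQ₅⟩ := exists_kernel_basis_matrix e2.B0
  have h₃ := kronecker_mul_kronecker_eq_one hP₃ hQ₃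
  have h₅ := kronecker_mul_kronecker_eq_one hP₅ hQ₅
  simpa using card_add_card_add_card_le_kdim
    (P := Matrix.fromCols 0 <| Matrix.fromCols 0 <| Matrix.fromCols (P₃ ⊗ₖ Q₃) 0)
    (Q := Matrix.fromCols 0 <| Matrix.fromCols 0 <| Matrix.fromCols 0 <| Matrix.fromCols 0 <|
      Matrix.fromCols (P₅ ⊗ₖ Q₅) 0)
    (R := Matrix.fromCols R 0)
    (spliceD_mul_srcBlocks_third hK₃ hL₃) (spliceD_mul_srcBlocks_fifth hK₅ hL₅) hC
    (by simp [srcBlocks, Matrix.fromCols_mul_fromRows, h₃])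
    (by simp [srcBlocks, Matrix.fromCols_mul_fromRows])
    (by simp [srcBlocks, Matrix.fromCols_mul_fromRows, h₅])
    (by simp [srcBlocks, Matrix.fromCols_mul_fromRows])
    (by simp [srcBlocks, Matrix.fromCols_mul_fromRows])
    (by simp [srcBlocks, Matrix.fromCols_mul_fromRows, hR])

theorem le_kdim_spliceD (e1 e2 : SplicingDatum) :
    kdim e1.B0 * kdim e2.Binf + kdim e1.Binf * kdim e2.B0 +
        max (kdim (e1.Binf * e1.B1) * (kdim (e2.B1 * e2.B0) - kdim e2.B0))
          (kdim e1.B1 * kdim e2.B1) ≤ kdim (spliceD e1 e2) := by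
  rw [← Nat.add_max_add_left]
  refine max_le ?_ ?_
  · obtain ⟨K, P, hK, hP⟩ := exists_kernel_basis_matrix (e1.Binf * e1.B1)
    obtain ⟨L, Q, hL, hQ⟩ := exists_relative_kernel_basis_matrix e2.B1 e2.B0
    rw [Matrix.mul_assoc] at hK
    simpa using add_card_le_kdim_spliceD (spliceD_mul_srcBlocks_first_fifth hK hL)
      (kronecker_mul_kronecker_eq_one hP hQ)
  · obtain ⟨K, P, hK, hP⟩ := exists_kernel_basis_matrix e1.B1
    obtain ⟨L, Q, hL, hQ⟩ := exists_kernel_basis_matrix e2.B1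
    simpa using add_card_le_kdim_spliceD (spliceD_mul_srcBlocks_first hK hL)
      (kronecker_mul_kronecker_eq_one hP hQ)

end Kernel

section Cokernel

theorem tgtBlocks_fourth_mul_spliceD {ι κ : Type*} {K : Matrix ι (Fin e1.a1) F2}
    {L : Matrix κ (Fin e2.ainf) F2} (hK : K * e1.Binf = 0) (hL : L * e2.B0 = 0) :
    tgtBlocks 0 0 0 (K ⊗ₖ L) 0 0 * spliceD e1 e2 = 0 := by
  simp [tgtBlocks, spliceD, row4, Matrix.mul_fromCols, Matrix.mul_add,
    Matrix.fromCols_mul_fromRows, ← Matrix.mul_kronecker_mul, ← Matrix.mul_assoc, hK, hL]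

theorem tgtBlocks_second_mul_spliceD {ι κ : Type*} {K : Matrix ι (Fin e1.ainf) F2}
    {L : Matrix κ (Fin e2.a1) F2} (hK : K * e1.B0 = 0) (hL : L * e2.Binf = 0) :
    tgtBlocks 0 (K ⊗ₖ L) 0 0 0 0 * spliceD e1 e2 = 0 := by
  simp [tgtBlocks, spliceD, row2, Matrix.mul_fromCols,
    Matrix.fromCols_mul_fromRows, ← Matrix.mul_kronecker_mul, ← Matrix.mul_assoc, hK, hL]

theorem tgtBlocks_first_mul_spliceD {ι κ : Type*} {K : Matrix ι (Fin e1.a0) F2}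
    {L : Matrix κ (Fin e2.a0) F2} (hK : K * e1.B1 = 0) (hL : L * e2.B1 = 0) :
    tgtBlocks (K ⊗ₖ L) 0 0 0 0 0 * spliceD e1 e2 = 0 := by
  simp [tgtBlocks, spliceD, row1, Matrix.mul_fromCols,
    Matrix.fromCols_mul_fromRows, ← Matrix.mul_kronecker_mul, ← Matrix.mul_assoc, hK, hL]

theorem tgtBlocks_first_second_third_mul_spliceD {ι κ : Type*} {K : Matrix ι (Fin e1.a0) F2}
    {L : Matrix κ (Fin e2.a1) F2} (hK : K * e1.B1 * e1.B0 = 0) (hL : L * e2.Binf * e2.B1 = 0) :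
    tgtBlocks (K ⊗ₖ (L * e2.Binf)) ((K * e1.B1 * e1.A0) ⊗ₖ (L * e2.Ainf))
      ((K * e1.B1 * e1.A0) ⊗ₖ (L * e2.Binf)) 0 0 0 * spliceD e1 e2 = 0 := by
  have hAinf : L * e2.Ainf * e2.Binf = L * e2.Binf * e2.Dinf := by
    rw [Matrix.mul_assoc, Ainf_mul_Binf, Matrix.mul_assoc]
  have hA0 : K * e1.B1 * e1.A0 * e1.B0 = 0 := by
    rw [Matrix.mul_assoc, A0_mul_B0, ← Matrix.mul_assoc, hK, Matrix.zero_mul]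
  have hcancel {p : Type} (M N : Matrix (ι × κ) p F2) : M + (N + (M + N)) = 0 := by
    rw [← add_assoc, ZModModule.add_self]
  simp [tgtBlocks, spliceD, row1, row2, row3, Matrix.mul_fromCols, Matrix.mul_add,
    Matrix.fromCols_mul_fromRows, ← Matrix.mul_kronecker_mul, ← Matrix.mul_assoc, hK, hL, hA0,
    hAinf, fromCols_add_fromCols, ZModModule.add_self, hcancel]

theorem add_card_le_cdim_spliceD {μ : Type*} [Fintype μ] [DecidableEq μ]
    {C : Matrix μ (Fin e1.a0 × Fin e2.a0) F2} {R : Matrix (Fin e1.a0 × Fin e2.a0) μ F2}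
    {S : Matrix μ (Fin e1.ainf × Fin e2.a1) F2} {T : Matrix μ (Fin e1.ainf × Fin e2.a0) F2}
    (hC : tgtBlocks C S T 0 0 0 * spliceD e1 e2 = 0) (hR : C * R = 1) :
    cdim e1.B0 * cdim e2.Binf + cdim e1.Binf * cdim e2.B0 + Fintype.card μ ≤
      cdim (spliceD e1 e2) := by
  obtain ⟨K₂, P₂, hK₂, hP₂⟩ := exists_cokernel_basis_matrix e1.B0
  obtain ⟨L₂, Q₂, hL₂, hQ₂⟩ := exists_cokernel_basis_matrix e2.Binf
  obtain ⟨K₄, P₄, hK₄, hP₄⟩ := exists_cokernel_basis_matrix e1.Binf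
  obtain ⟨L₄, Q₄, hL₄, hQ₄⟩ := exists_cokernel_basis_matrix e2.B0
  have h₂ := kronecker_mul_kronecker_eq_one hP₂ hQ₂
  have h₄ := kronecker_mul_kronecker_eq_one hP₄ hQ₄
  simpa using card_add_card_add_card_le_cdim
    (P := Matrix.fromRows 0 <| Matrix.fromRows (P₂ ⊗ₖ Q₂) 0)
    (Q := Matrix.fromRows 0 <| Matrix.fromRows 0 <| Matrix.fromRows 0 <|
      Matrix.fromRows (P₄ ⊗ₖ Q₄) 0)
    (R := Matrix.fromRows R 0)
    (tgtBlocks_second_mul_spliceD hK₂ hL₂) (tgtBlocks_fourth_mul_spliceD hK₄ hL₄) hC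
    (by simp [tgtBlocks, Matrix.fromCols_mul_fromRows, h₂])
    (by simp [tgtBlocks, Matrix.fromCols_mul_fromRows])
    (by simp [tgtBlocks, Matrix.fromCols_mul_fromRows, h₄])
    (by simp [tgtBlocks, Matrix.fromCols_mul_fromRows])
    (by simp [tgtBlocks, Matrix.fromCols_mul_fromRows])
    (by simp [tgtBlocks, Matrix.fromCols_mul_fromRows, hR])

theorem le_cdim_spliceD (e1 e2 : SplicingDatum) :
    cdim e1.B0 * cdim e2.Binf + cdim e1.Binf * cdim e2.B0 +
        max (cdim (e1.B1 * e1.B0) * (cdim (e2.Binf * e2.B1) - cdim e2.Binf))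
          (cdim e1.B1 * cdim e2.B1) ≤ cdim (spliceD e1 e2) := by
  rw [← Nat.add_max_add_left]
  refine max_le ?_ ?_
  · obtain ⟨K, P, hK, hP⟩ := exists_cokernel_basis_matrix (e1.B1 * e1.B0)
    obtain ⟨L, Q, hL, hQ⟩ := exists_relative_cokernel_basis_matrix e2.Binf e2.B1
    rw [← Matrix.mul_assoc] at hK
    simpa using add_card_le_cdim_spliceD (tgtBlocks_first_second_third_mul_spliceD hK hL)
      (kronecker_mul_kronecker_eq_one hP hQ)
  · obtain ⟨K, P, hK, hP⟩ := exists_cokernel_basis_matrix e1.B1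
    obtain ⟨L, Q, hL, hQ⟩ := exists_cokernel_basis_matrix e2.B1
    simpa using add_card_le_cdim_spliceD (tgtBlocks_first_mul_spliceD hK hL)
      (kronecker_mul_kronecker_eq_one hP hQ)

end Cokernel

end SplicingDatum

open SplicingDatum in
/-- The subtractions do not truncate, since `ker B0² ⊆ ker (B1² B0²)` and
`im (Binf² B1²) ⊆ im Binf²`. -/
theorem stmt10_general (e1 e2 : SplicingDatum) :
    kdim (spliceD e1 e2) ≥
      kdim e1.B0 * kdim e2.Binf + kdim e1.Binf * kdim e2.B0 +
        max (kdim (e1.Binf * e1.B1) * (kdim (e2.B1 * e2.B0) - kdim e2.B0))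
          (kdim e1.B1 * kdim e2.B1) ∧
    cdim (spliceD e1 e2) ≥
      cdim e1.B0 * cdim e2.Binf + cdim e1.Binf * cdim e2.B0 +
        max (cdim (e1.B1 * e1.B0) * (cdim (e2.Binf * e2.B1) - cdim e2.Binf))
          (cdim e1.B1 * cdim e2.B1) :=
  ⟨le_kdim_spliceD e1 e2, le_cdim_spliceD e1 e2⟩

open SplicingDatum in
/-- lower bounds on `dim ker D` and `dim coker D` when `B0²` is injective
and `Binf²` is surjective. -/
theorem stmt10 (e1 e2 : SplicingDatum)
    (hinj : Function.Injective e2.B0.mulVecLin)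
    (hsurj : Function.Surjective e2.Binf.mulVecLin) :
    kdim (spliceD e1 e2) ≥
      kdim e1.B0 * kdim e2.Binf + kdim e1.Binf * kdim e2.B0 +
        max (kdim (e1.Binf * e1.B1) * kdim (e2.B1 * e2.B0)) (kdim e1.B1 * kdim e2.B1) ∧
    cdim (spliceD e1 e2) ≥
      cdim e1.B0 * cdim e2.Binf + cdim e1.Binf * cdim e2.B0 +
        max (cdim (e1.B1 * e1.B0) * cdim (e2.Binf * e2.B1)) (cdim e1.B1 * cdim e2.B1) := by
  simpa only [kdim_eq_zero_of_injective hinj, cdim_eq_zero_of_surjective hsurj, Nat.sub_zero]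
    using stmt10_general e1 e2
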